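/- For every integer k ≥ 2 and every fixed graph G with χ(G) ≥ k + 1, the k-cover Turán density satisfies π̂_k(G) = 1 − 1/(χ(G)−1). -/

import Mathlib

/-- A hypergraph `H` (given by its finite collection of hyperedges on vertex type `β`)
contains a Berge copy of the graph `G`: there is an injection of the vertices of `G`
and an injection of the edges of `G` into hyperedges of `H` such that each edge of `G`
is contained in its corresponding hyperedge. -/
def HasBergeCopy {α β : Type*} [DecidableEq β] (G : SimpleGraph α)
    (H : Finset (Finset β)) : Prop :=
  ∃ (i : α → β) (f : Sym2 α → Finset β),
    Function.Injective i ∧ Set.InjOn f G.edgeSet ∧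
    (∀ e ∈ G.edgeSet, f e ∈ H) ∧
    (∀ u v, G.Adj u v → i u ∈ f s(u, v) ∧ i v ∈ f s(u, v))

/-- The edge set of the shadow graph of a hypergraph `H`: all 2-element subsets of
vertices covered by some hyperedge of `H`. -/
def covPairs {β : Type*} [DecidableEq β] (H : Finset (Finset β)) : Finset (Finset β) :=
  H.biUnion fun h => Finset.powersetCard 2 h

/-- The `R`-cover Turán number `êx_R(n, G)`: the maximum number of edges in the shadow
of a Berge-`G`-free `R`-graph on `n` vertices. -/
noncomputable def coverTuranNumber {α : Type*} (R : Set ℕ) (n : ℕ)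
    (G : SimpleGraph α) : ℕ :=
  sSup { m | ∃ H : Finset (Finset (Fin n)),
    (∀ h ∈ H, h.card ∈ R) ∧ ¬ HasBergeCopy G H ∧ m = (covPairs H).card }

/-- The `k`-cover Turán density `π̂_k(G) = limsup_{n → ∞} êx_k(n, G) / C(n,2)`. -/
noncomputable def coverTuranDensity {α : Type*} (k : ℕ) (G : SimpleGraph α) : ℝ :=
  Filter.limsup
    (fun n : ℕ => (coverTuranNumber {k} n G : ℝ) / (n.choose 2 : ℝ)) Filter.atTop

/-! Write `r = χ(G) - 1`.

*Upper bound.* Suppose the shadow of `H` contains a blow-up of `G` with parts larger than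
`|V(G)|³ k`, and fix a hyperedge of `H` over each shadow edge. For a uniformly random choice of one
vertex per part, and fixed `u, v, w` with `w ≠ u, v`, the hyperedge over the vertices chosen for
`u` and `v` has at most `k` elements, so it contains the vertex chosen for `w` with probability
below `1 / |V(G)|³`. By the union bound some choice avoids all these events; its hyperedges then
meet the chosen vertices only in the endpoints of their edges, hence are distinct and form a
Berge-`G`. The shadow of a Berge-`G`-free hypergraph is therefore free of a fixed
`(r + 1)`-colourable graph, and the Erdős–Stone theorem applies.

*Lower bound.* Colour the vertices with `r ≥ k` colours in a balanced way and take all `k`-sets with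
distinct colours. The shadow is the Turán graph, and a Berge-`G` would give a proper `r`-colouring
of `G`.
-/

open SimpleGraph Finset Filter Topology

section TuranDensity

variable {W : Type*} {H : SimpleGraph W}

theorem extremalNumber_succ_le_add_of_minDegree {n : ℕ} {d : ℝ} (hd : 0 ≤ d)
    (h : ∀ ⦃G : SimpleGraph (Fin (n + 1))⦄ [DecidableRel G.Adj], d ≤ G.minDegree → H ⊑ G) :
    (extremalNumber (n + 1) H : ℝ) ≤ extremalNumber n H + d := by
  conv_lhs => rw [← Fintype.card_fin (n + 1)]
  refine (extremalNumber_le_iff_of_nonneg H (by positivity)).mpr fun G _ hfree => ?_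
  obtain ⟨v, hv⟩ := G.exists_minimal_degree_vertex
  have hdeg : (G.degree v : ℝ) ≤ d := by
    rw [← hv]
    exact (not_le.mp fun hle => hfree (h hle)).le
  have hdel := card_edgeFinset_deleteIncidenceSet_le_extremalNumber hfree v
  rw [card_edgeFinset_deleteIncidenceSet, Fintype.card_fin, Nat.add_sub_cancel,
    Nat.sub_le_iff_le_add] at hdel
  calc (#G.edgeFinset : ℝ) ≤ extremalNumber n H + G.degree v := mod_cast hdel
    _ ≤ extremalNumber n H + d := by gcongr

theorem tendsto_add_mul_succ_choose_two_div_choose_two (B c : ℝ) :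
    Tendsto (fun n : ℕ => (B + c * (n + 1).choose 2) / n.choose 2) atTop (𝓝 c) := by
  have hinv : Tendsto (fun n : ℕ => (n : ℝ)⁻¹) atTop (𝓝 0) := tendsto_inv_atTop_nhds_zero_nat
  have hlim : Tendsto (fun n : ℕ => (2 * B * (n : ℝ)⁻¹ * (n : ℝ)⁻¹ + c * (1 + (n : ℝ)⁻¹)) /
      (1 - (n : ℝ)⁻¹)) atTop (𝓝 ((2 * B * 0 * 0 + c * (1 + 0)) / (1 - 0))) :=
    (((hinv.const_mul _).mul hinv).add ((hinv.const_add 1).const_mul c)).div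
      (hinv.const_sub 1) (by norm_num)
  rw [show (2 * B * 0 * 0 + c * (1 + 0)) / (1 - 0) = c by ring] at hlim
  refine hlim.congr' ?_
  filter_upwards [eventually_ge_atTop 2] with n hn
  have hn2 : (2 : ℝ) ≤ n := mod_cast hn
  have hn1 : (n : ℝ) - 1 ≠ 0 := by linarith
  rw [Nat.cast_choose_two, Nat.cast_choose_two]
  push_cast
  field_simp
  ring

theorem turanDensity_le_of_eventually_minDegree {c : ℝ} (hc : 0 ≤ c)
    (h : ∀ᶠ n : ℕ in atTop, ∀ {G : SimpleGraph (Fin n)} [DecidableRel G.Adj],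
      G.minDegree ≥ c * n → H ⊑ G) :
    turanDensity H ≤ c := by
  obtain ⟨N, hN⟩ := eventually_atTop.mp h
  -- `f` is eventually antitone: delete a vertex of minimum degree from an `H`-free graph.
  let f : ℕ → ℝ := fun n => extremalNumber n H - c * (n + 1).choose 2
  have hanti : AntitoneOn f (Set.Ici N) := antitoneOn_nat_Ici_of_succ_le fun n hn => by
    have hstep := extremalNumber_succ_le_add_of_minDegree (H := H) (n := n)
      (d := c * (n + 1 : ℕ)) (by positivity) fun G _ => hN (n + 1) (by omega)
    have hchoose : ((n + 1 + 1).choose 2 : ℝ) = (n + 1 : ℕ) + (n + 1).choose 2 := by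
      rw [Nat.choose_succ_succ' (n + 1) 1, Nat.choose_one_right, Nat.cast_add]
    simp only [f, hchoose]
    linarith
  refine le_of_tendsto_of_tendsto (tendsto_turanDensity H)
    (tendsto_add_mul_succ_choose_two_div_choose_two (f N) c) ?_
  filter_upwards [eventually_ge_atTop N] with n hn
  have hfn : f n ≤ f N := hanti Set.self_mem_Ici hn hn
  gcongr
  linarith

theorem turanDensity_completeEquipartiteGraph_succ_le (r t : ℕ) :
    turanDensity (completeEquipartiteGraph (r + 1) t) ≤ 1 - 1 / (r : ℝ) :=
  le_of_forall_pos_le_add fun _ hε =>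
    turanDensity_le_of_eventually_minDegree
      (add_nonneg (Nat.one_sub_one_div_cast_nonneg r) hε.le)
      (eventually_completeEquipartiteGraph_isContained_of_minDegree hε r t)

theorem turanDensity_le_of_isContained {W' : Type*} {H' : SimpleGraph W'} (h : H' ⊑ H) :
    turanDensity H' ≤ turanDensity H :=
  le_of_tendsto_of_tendsto' (tendsto_turanDensity H') (tendsto_turanDensity H) fun n => by
    have := h.extremalNumber_le (n := n)
    gcongr

theorem turanDensity_le_of_colorable [Finite W] {r : ℕ} (hH : H.Colorable (r + 1)) :
    turanDensity H ≤ 1 - 1 / (r : ℝ) := by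
  classical
  have := Fintype.ofFinite W
  obtain ⟨C⟩ := hH
  exact (turanDensity_le_of_isContained (isContained_completeEquipartiteGraph_of_colorable C
    (Fintype.card W) fun _ => Fintype.card_subtype_le _)).trans
    (turanDensity_completeEquipartiteGraph_succ_le r _)

theorem one_sub_one_div_mul_choose_two_le_card_edgeFinset_turanGraph {r : ℕ} (hr : 0 < r)
    (n : ℕ) : (1 - 1 / (r : ℝ)) * n.choose 2 ≤ #(turanGraph n r).edgeFinset := by
  induction n using Nat.strong_induction_on with | _ n ih =>
  have hfactor : 1 - 1 / (r : ℝ) ≤ 1 := by simp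
  rcases lt_or_ge n r with hn | hn
  · have hcard : #(turanGraph n r).edgeFinset = n.choose 2 :=
      calc #(turanGraph n r).edgeFinset
          = #(⊤ : SimpleGraph (Fin n)).edgeFinset :=
            congrArg card (edgeFinset_inj.mpr (turanGraph_eq_top.mpr (Or.inr hn.le)))
        _ = n.choose 2 := by rw [card_edgeFinset_top_eq_card_choose_two, Fintype.card_fin]
    rw [hcard]
    exact mul_le_of_le_one_left (by positivity) hfactor
  · obtain ⟨m, rfl⟩ := Nat.exists_eq_add_of_le' hn
    have hchoose : ((m + r).choose 2 : ℝ) = m.choose 2 + m * r + r.choose 2 := by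
      simp only [Nat.cast_choose_two]
      push_cast
      ring
    have hcross : (1 - 1 / (r : ℝ)) * (m * r) = m * (r - 1 : ℕ) := by
      rw [Nat.cast_pred hr]
      field_simp
    have hlast : (1 - 1 / (r : ℝ)) * r.choose 2 ≤ r.choose 2 :=
      mul_le_of_le_one_left (by positivity) hfactor
    rw [card_edgeFinset_turanGraph_add, hchoose]
    push_cast
    linarith [ih m (by omega)]

end TuranDensity

section Update

variable {α ι : Type*} [Fintype ι]

theorem card_filter_mul_card_le_of_update [Fintype α] [DecidableEq α]
    (p : (α → ι) → Prop) [DecidablePred p] (w : α) {k : ℕ}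
    (hp : ∀ s, #{x | p (Function.update s w x)} ≤ k) :
    #{s | p s} * Fintype.card ι ≤ Fintype.card (α → ι) * k := by
  classical
  -- Double counting of the pairs `(s, s')` that agree off `w`, with `p s`.
  refine card_mul_le_card_mul (fun s s' => ∃ x, s = Function.update s' w x)
    (s := {s | p s}) (t := univ) (fun s _ => ?_) fun s' _ => ?_
  · rw [← card_univ, ← card_image_of_injective univ (Function.update_injective s w)]
    refine card_le_card fun s' hs' => ?_
    obtain ⟨x, -, rfl⟩ := mem_image.mp hs'
    exact mem_filter.mpr ⟨mem_univ _, s w, by simp⟩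
  · refine (card_le_card fun s hs => ?_).trans
      ((card_image_le (f := Function.update s' w)).trans (hp s'))
    obtain ⟨hs, x, rfl⟩ := mem_filter.mp hs
    exact mem_image_of_mem _ (by simpa using hs)

theorem exists_forall_not_of_update [Finite α] [DecidableEq α] {P : Type*} [Fintype P]
    (p : P → (α → ι) → Prop) (w : P → α) {k : ℕ} [∀ c, DecidablePred (p c)]
    (hp : ∀ c s, #{x | p c (Function.update s (w c) x)} ≤ k)
    (hk : Fintype.card P * k < Fintype.card ι) : ∃ s, ∀ c, ¬ p c s := by
  classical
  have := Fintype.ofFinite α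
  by_contra! hbad
  have hcover : Fintype.card (α → ι) ≤ ∑ c, #{s | p c s} := by
    rw [← card_univ]
    refine (card_le_card fun s _ => ?_).trans card_biUnion_le
    simpa using hbad s
  have hι : Nonempty ι := Fintype.card_pos_iff.mp (by omega)
  have hle : Fintype.card (α → ι) * Fintype.card ι ≤
      Fintype.card (α → ι) * (Fintype.card P * k) :=
    calc Fintype.card (α → ι) * Fintype.card ι
        ≤ ∑ c, #{s | p c s} * Fintype.card ι := by
          rw [← sum_mul]
          gcongr
      _ ≤ ∑ _c : P, Fintype.card (α → ι) * k :=
          sum_le_sum fun c _ => card_filter_mul_card_le_of_update (p c) (w c) (hp c)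
      _ = Fintype.card (α → ι) * (Fintype.card P * k) := by
          rw [sum_const, card_univ, smul_eq_mul]
          ring
  exact hk.not_ge (Nat.le_of_mul_le_mul_left hle Fintype.card_pos)

theorem exists_section_forall_notMem [Fintype α] {β : Type*} {k : ℕ} (φ : α × ι ↪ β)
    (g : Sym2 β → Finset β) (hg : ∀ e, #(g e) ≤ k)
    (hι : Fintype.card (α × α × α) * k < Fintype.card ι) :
    ∃ s : α → ι, ∀ u v w, w ≠ u → w ≠ v → φ (w, s w) ∉ g s(φ (u, s u), φ (v, s v)) := by
  classical
  let bad : α × α × α → (α → ι) → Prop := fun ⟨u, v, w⟩ s =>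
    w ≠ u ∧ w ≠ v ∧ φ (w, s w) ∈ g s(φ (u, s u), φ (v, s v))
  have hbad : ∀ c s, #{x | bad c (Function.update s c.2.2 x)} ≤ k := by
    rintro ⟨u, v, w⟩ s
    refine (card_le_card_of_injOn (fun x => φ (w, x)) (fun x hx => ?_) fun x _ y _ hxy => ?_).trans
      (hg s(φ (u, s u), φ (v, s v)))
    · obtain ⟨hu, hv, hmem⟩ := (mem_filter.mp hx).2
      simpa [Function.update_of_ne hu.symm, Function.update_of_ne hv.symm] using hmem
    · simpa using φ.injective hxy
  obtain ⟨s, hs⟩ := exists_forall_not_of_update bad (fun c => c.2.2) hbad hι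
  exact ⟨s, fun u v w hu hv hmem => hs (u, v, w) ⟨hu, hv, hmem⟩⟩

end Update

section Shadow

variable {β : Type*} {H : Finset (Finset β)}

/-- The shadow `∂H` as a simple graph; `covPairs H` is its edge set, with edges encoded as
two-element finsets (see `card_covPairs`). -/
def shadowGraph (H : Finset (Finset β)) : SimpleGraph β where
  Adj a b := a ≠ b ∧ ∃ h ∈ H, a ∈ h ∧ b ∈ h
  symm := ⟨fun _ _ ⟨hne, h, hH, ha, hb⟩ => ⟨hne.symm, h, hH, hb, ha⟩⟩
  loopless := ⟨fun _ hadj => hadj.1 rfl⟩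

theorem card_covPairs [DecidableEq β] [Fintype (shadowGraph H).edgeSet] :
    #(covPairs H) = #(shadowGraph H).edgeFinset := by
  have himage : covPairs H = (shadowGraph H).edgeFinset.image Sym2.toFinset := by
    ext p
    simp only [covPairs, mem_biUnion, mem_powersetCard, mem_image, mem_edgeFinset]
    constructor
    · rintro ⟨h, hH, hsub, hcard⟩
      obtain ⟨a, b, hab, rfl⟩ := card_eq_two.mp hcard
      exact ⟨s(a, b), ⟨hab, h, hH, hsub (by simp), hsub (by simp)⟩, Sym2.toFinset_mk_eq⟩
    · rintro ⟨⟨a, b⟩, ⟨hab, h, hH, ha, hb⟩, rfl⟩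
      refine ⟨h, hH, ?_, Sym2.card_toFinset_of_not_isDiag _ (by simpa using hab)⟩
      rw [Sym2.toFinset_mk_eq]
      exact insert_subset ha (singleton_subset_iff.mpr hb)
  rw [himage, card_image_of_injective]
  intro e e' hee
  ext x
  rw [← Sym2.mem_toFinset, hee, Sym2.mem_toFinset]

theorem exists_hyperedge_choice {k : ℕ} (hH : ∀ h ∈ H, #h ≤ k) :
    ∃ g : Sym2 β → Finset β, (∀ e, #(g e) ≤ k) ∧
      ∀ e ∈ (shadowGraph H).edgeSet, g e ∈ H ∧ ∀ x ∈ e, x ∈ g e := by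
  suffices hex : ∀ e : Sym2 β, ∃ h : Finset β, #h ≤ k ∧
      (e ∈ (shadowGraph H).edgeSet → h ∈ H ∧ ∀ x ∈ e, x ∈ h) by
    choose g hcard hg using hex
    exact ⟨g, hcard, hg⟩
  rintro ⟨a, b⟩
  by_cases hab : (shadowGraph H).Adj a b
  · obtain ⟨-, h, hh, ha, hb⟩ := hab
    refine ⟨h, hH h hh, fun _ => ⟨hh, fun x hx => ?_⟩⟩
    rcases Sym2.mem_iff.mp hx with rfl | rfl <;> assumption
  · exact ⟨∅, by simp, fun h => absurd h hab⟩

end Shadow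

section Berge

variable {α β : Type*} [DecidableEq β] {G : SimpleGraph α} {H : Finset (Finset β)}

theorem hasBergeCopy_of_forall_mem_iff {i : α → β} (hi : Function.Injective i)
    {f : Sym2 α → Finset β} (hfH : ∀ e ∈ G.edgeSet, f e ∈ H)
    (hf : ∀ e ∈ G.edgeSet, ∀ w, i w ∈ f e ↔ w ∈ e) : HasBergeCopy G H := by
  refine ⟨i, f, hi, fun e he e' he' hee => ?_, hfH, fun u v huv => ?_⟩
  · ext w
    rw [← hf e he, hee, hf e' he']
  · exact ⟨(hf _ huv u).mpr (Sym2.mem_mk_left u v), (hf _ huv v).mpr (Sym2.mem_mk_right u v)⟩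

/-- The blow-up of `G`: each vertex `u` becomes the independent set `{u} × ι`, and each edge a
complete bipartite graph. -/
def blowup (G : SimpleGraph α) (ι : Type*) : SimpleGraph (α × ι) :=
  G.comap Prod.fst

theorem colorable_blowup {r : ℕ} (hG : G.Colorable r) (ι : Type*) : (blowup G ι).Colorable r :=
  hG.of_hom (Hom.comap Prod.fst G)

theorem hasBergeCopy_of_blowup_isContained [Fintype α] {ι : Type*} [Fintype ι] {k : ℕ}
    (hH : ∀ h ∈ H, #h ≤ k) (hι : Fintype.card (α × α × α) * k < Fintype.card ι)
    (hcont : blowup G ι ⊑ shadowGraph H) : HasBergeCopy G H := by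
  classical
  obtain ⟨φ⟩ := hcont
  obtain ⟨g, hgk, hg⟩ := exists_hyperedge_choice hH
  obtain ⟨s, hs⟩ := exists_section_forall_notMem φ.toEmbedding g hgk hι
  have hadj : ∀ {u v}, G.Adj u v → (shadowGraph H).Adj (φ (u, s u)) (φ (v, s v)) :=
    fun huv => φ.toHom.map_adj (v := (_, s _)) (w := (_, s _)) huv
  refine hasBergeCopy_of_forall_mem_iff (i := fun u => φ (u, s u))
    (f := fun e => g (e.map fun u => φ (u, s u)))
    (fun u v huv => congrArg Prod.fst (φ.injective huv)) ?_ ?_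
  · rintro ⟨u, v⟩ huv
    exact (hg _ (hadj huv)).1
  · rintro ⟨u, v⟩ huv w
    refine ⟨fun hw => ?_, fun hw => (hg _ (hadj huv)).2 _ (Sym2.mem_map.mpr ⟨w, hw, rfl⟩)⟩
    by_contra hne
    obtain ⟨hwu, hwv⟩ := not_or.mp (mt Sym2.mem_iff.mpr hne)
    exact hs u v w hwu hwv hw

theorem HasBergeCopy.nonempty_coloring {γ : Type*} (hGH : HasBergeCopy G H) {c : β → γ}
    (hc : ∀ h ∈ H, Set.InjOn c h) : Nonempty (G.Coloring γ) := by
  obtain ⟨i, f, hi, -, hfH, hf⟩ := hGH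
  refine ⟨Coloring.mk (c ∘ i) fun {u v} huv hcuv => huv.ne (hi ?_)⟩
  exact hc _ (hfH _ huv) (hf u v huv).1 (hf u v huv).2 hcuv

end Berge

section PartialTransversals

variable {β γ : Type*} [Fintype β] {c : β → γ} {k : ℕ}

/-- The `k`-element sets meeting every colour class of `c` at most once: the hyperedges of the
complete multipartite `k`-graph whose parts are the fibres of `c`. -/
noncomputable def partialTransversals (c : β → γ) (k : ℕ) : Finset (Finset β) :=
  open Classical in {h ∈ powersetCard k univ | Set.InjOn c h}

theorem mem_partialTransversals {h : Finset β} :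
    h ∈ partialTransversals c k ↔ #h = k ∧ Set.InjOn c h := by
  simp [partialTransversals]

theorem exists_mem_partialTransversals_superset [Fintype γ] (hc : Function.Surjective c)
    {p : Finset β} (hp : Set.InjOn c p) (hpk : #p ≤ k) (hk : k ≤ Fintype.card γ) :
    ∃ h ∈ partialTransversals c k, p ⊆ h := by
  classical
  obtain ⟨u, hpu, -, himage, hu⟩ := hp.exists_subset_injOn_subset_range_eq (Set.subset_univ _)
  have hcard : Fintype.card γ = #u.toFinset := by
    rw [← card_image_of_injOn (by simpa using hu), ← card_univ]
    congr 1
    rw [← coe_inj]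
    simpa [hc.range_eq] using himage.symm
  obtain ⟨h, hph, hhu, hhk⟩ := exists_subsuperset_card_eq
    (show p ⊆ u.toFinset by simpa [← coe_subset] using hpu) hpk (hcard ▸ hk)
  exact ⟨h, mem_partialTransversals.mpr ⟨hhk, hu.mono (by simpa [← coe_subset] using hhu)⟩, hph⟩

theorem shadowGraph_partialTransversals [Fintype γ] (hc : Function.Surjective c) (hk : 2 ≤ k)
    (hkγ : k ≤ Fintype.card γ) :
    shadowGraph (partialTransversals c k) = (⊤ : SimpleGraph γ).comap c := by
  classical
  ext a b
  constructor
  · rintro ⟨hab, h, hh, ha, hb⟩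
    exact fun hcab => hab ((mem_partialTransversals.mp hh).2 ha hb hcab)
  · intro hcab
    have hinj : Set.InjOn c ({a, b} : Finset β) := by
      simpa [Set.injOn_pair] using fun heq => absurd heq hcab
    obtain ⟨h, hh, habh⟩ := exists_mem_partialTransversals_superset hc hinj
      (card_le_two.trans hk) hkγ
    exact ⟨fun hab => hcab (congrArg c hab), h, hh, habh (by simp), habh (by simp)⟩

end PartialTransversals

section CoverTuranNumber

variable {α : Type*} {G : SimpleGraph α} {R : Set ℕ} {n : ℕ}

theorem card_covPairs_le_coverTuranNumber {H : Finset (Finset (Fin n))} (hR : ∀ h ∈ H, #h ∈ R)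
    (hH : ¬ HasBergeCopy G H) : #(covPairs H) ≤ coverTuranNumber R n G := by
  refine le_csSup ⟨Fintype.card (Finset (Fin n)), ?_⟩ ⟨H, hR, hH, rfl⟩
  rintro _ ⟨H', -, -, rfl⟩
  exact card_le_univ _

theorem coverTuranNumber_le_extremalNumber_blowup [Fintype α] {ι : Type*} [Fintype ι] {k : ℕ}
    (hR : ∀ m ∈ R, m ≤ k) (hι : Fintype.card (α × α × α) * k < Fintype.card ι) :
    coverTuranNumber R n G ≤ extremalNumber n (blowup G ι) := by
  classical
  refine csSup_le' ?_
  rintro _ ⟨H, hHR, hH, rfl⟩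
  have hfree : (blowup G ι).Free (shadowGraph H) :=
    mt (hasBergeCopy_of_blowup_isContained (fun h hh => hR _ (hHR h hh)) hι) hH
  simpa [card_covPairs] using card_edgeFinset_le_extremalNumber hfree

theorem turanGraph_eq_comap_top (n r : ℕ) [NeZero r] :
    turanGraph n r = (⊤ : SimpleGraph (Fin r)).comap fun v : Fin n => Fin.ofNat r v := by
  ext v w
  simp [turanGraph_adj, Fin.ext_iff]

theorem card_edgeFinset_turanGraph_le_coverTuranNumber {k r : ℕ} (hkR : k ∈ R) (hk : 2 ≤ k)
    (hkr : k ≤ r) (hrn : r ≤ n) (hG : ¬ G.Colorable r) :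
    #(turanGraph n r).edgeFinset ≤ coverTuranNumber R n G := by
  classical
  have : NeZero r := ⟨by omega⟩
  let c : Fin n → Fin r := fun v => Fin.ofNat r v
  have hc : Function.Surjective c := fun x =>
    ⟨x.castLE hrn, Fin.ext (Nat.mod_eq_of_lt x.isLt)⟩
  have hshadow : shadowGraph (partialTransversals c k) = turanGraph n r := by
    rw [shadowGraph_partialTransversals hc hk (by simpa using hkr), turanGraph_eq_comap_top]
  have hfree : ¬ HasBergeCopy G (partialTransversals c k) := fun hGH =>
    hG (hGH.nonempty_coloring fun h hh => (mem_partialTransversals.mp hh).2)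
  calc #(turanGraph n r).edgeFinset
      = #(shadowGraph (partialTransversals c k)).edgeFinset :=
        congrArg card (edgeFinset_inj.mpr hshadow.symm)
    _ = #(covPairs (partialTransversals c k)) := card_covPairs.symm
    _ ≤ coverTuranNumber R n G := card_covPairs_le_coverTuranNumber
        (fun h hh => (mem_partialTransversals.mp hh).1 ▸ hkR) hfree

end CoverTuranNumber

theorem stmt4_general {α : Type*} [Finite α] {R : Set ℕ} (hR : BddAbove R) {k : ℕ}
    (hkR : k ∈ R) (hk : 2 ≤ k) (G : SimpleGraph α) (χ : ℕ)
    (hχ : G.chromaticNumber = (χ : ℕ∞)) (hkχ : k + 1 ≤ χ) :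
    Tendsto (fun n : ℕ => (coverTuranNumber R n G : ℝ) / (n.choose 2 : ℝ)) atTop
      (𝓝 (1 - 1 / ((χ : ℝ) - 1))) := by
  have := Fintype.ofFinite α
  obtain ⟨r, rfl⟩ := Nat.exists_eq_add_of_le' (show 1 ≤ χ by omega)
  obtain ⟨hcol, hncol⟩ := chromaticNumber_eq_iff_colorable_not_colorable.mp (mod_cast hχ)
  obtain ⟨K, hK⟩ := hR
  rw [Nat.cast_succ, add_sub_cancel_right]
  let B := blowup G (Fin (Fintype.card (α × α × α) * K + 1))
  have hlower : ∀ᶠ n : ℕ in atTop,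
      1 - 1 / (r : ℝ) ≤ (coverTuranNumber R n G : ℝ) / n.choose 2 := by
    filter_upwards [eventually_ge_atTop r] with n hn
    rw [le_div_iff₀ (mod_cast Nat.choose_pos (by omega))]
    exact (one_sub_one_div_mul_choose_two_le_card_edgeFinset_turanGraph (by omega) n).trans
      (mod_cast card_edgeFinset_turanGraph_le_coverTuranNumber hkR hk (by omega) hn hncol)
  have hupper : ∀ n : ℕ, (coverTuranNumber R n G : ℝ) / n.choose 2 ≤
      extremalNumber n B / n.choose 2 := fun n => by
    gcongr
    exact coverTuranNumber_le_extremalNumber_blowup hK (by simp)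
  have hdensity : turanDensity B = 1 - 1 / (r : ℝ) :=
    (turanDensity_le_of_colorable (colorable_blowup hcol _)).antisymm
      (ge_of_tendsto (tendsto_turanDensity B) (hlower.mono fun n hn => hn.trans (hupper n)))
  exact tendsto_of_tendsto_of_tendsto_of_le_of_le' tendsto_const_nhds
    (hdensity ▸ tendsto_turanDensity B) hlower (.of_forall hupper)

theorem stmt4 {α : Type*} [Fintype α] (k : ℕ) (hk : 2 ≤ k) (G : SimpleGraph α)
    (χ : ℕ) (hχ : G.chromaticNumber = (χ : ℕ∞)) (hkχ : k + 1 ≤ χ) :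
    coverTuranDensity k G = 1 - 1 / ((χ : ℝ) - 1) :=
  (stmt4_general (Set.finite_singleton k).bddAbove rfl hk G χ hχ hkχ).limsup_eq
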